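/- arXiv:cond-mat/0310227 — 2 statements merged into one kernel-verified Lean document; each statement's English description precedes it below -/
import Mathlib

section
/- For every integer k ≥ 1 and every real r > 0 there exist a real β > 0 and an integer n₀ such that for all n ≥ n₀, setting m = ⌊rn⌋: (2n)^(km) · T(n,m) > (1 + β)^n · P(n,m)², where T(n,m) is the number of triples (σ, τ, F) with σ, τ : {1,…,n} → {0,1} assignments and F a sequence of m ordered k-clauses on n variables such that both σ and τ satisfy every clause of F, and P(n,m) is the number of pairs (σ, F) such that σ satisfies every clause of F. (Equivalently, in the i.i.d. clause model the second moment of the number of satisfying assignments exceeds (1+β)^n times the square of the first moment.) -/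
/-!
The ratio of the second moment to the squared first moment is the average of `f(x) ^ m` over pairs
of assignments, where `x ∈ [-1, 1]` is the correlation of the pair and
`f(x) = 1 + ((1 + x) ^ k - 1) / (2 ^ k - 1) ^ 2`. Typical pairs have `x ≈ 0`, where `f = 1`, but
`f` has positive slope at `0`: on `[0, 1]` we have `f(x) ≥ exp (λ x)` for some `λ > 0`, so that
`f(x) ^ m ≥ exp (λ m x) - 1` on all of `[-1, 1]`. As `n x` is a sum of `n` independent signs, the
average of `exp (λ m x)` is `cosh (λ m / n) ^ n`, which is exponentially large as `m / n → r > 0`.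
-/

open Filter Finset Real

namespace RandomSAT

section Counting

variable {α β ι : Type*}

theorem card_subtype_forall_apply [Fintype ι] (p : α → Prop) :
    Nat.card {f : ι → α // ∀ i, p (f i)} = Nat.card {a // p a} ^ Fintype.card ι := by
  rw [Nat.card_congr Equiv.subtypePiEquivPi, Nat.card_fun, Nat.card_eq_fintype_card (α := ι)]

theorem card_subtype_prod [Fintype α] [Finite β] (R : α → β → Prop) :
    Nat.card {x : α × β // R x.1 x.2} = ∑ a, Nat.card {b // R a b} := by
  rw [Nat.card_congr (Equiv.subtypeProdEquivSigmaSubtype R), Nat.card_sigma]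

theorem card_subtype_not_and_not [Finite α] (p q : α → Prop) :
    (Nat.card {a // ¬p a ∧ ¬q a} : ℝ) =
      Nat.card α - Nat.card {a // p a} - Nat.card {a // q a} + Nat.card {a // p a ∧ q a} := by
  have union_add_inter := Set.ncard_union_add_ncard_inter {a | p a} {a | q a}
  have union_add_compl := Set.ncard_add_ncard_compl ({a | p a} ∪ {a | q a})
  have compl_union : ({a | p a} ∪ {a | q a})ᶜ = {a | ¬p a ∧ ¬q a} := by
    ext a
    simp
  rw [compl_union] at union_add_compl
  simp only [← Nat.card_coe_set_eq, ← Set.ofPred_and, Set.coe_ofPred]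
    at union_add_inter union_add_compl ⊢
  rify at union_add_inter union_add_compl
  linarith

end Counting

section Satisfaction

variable {V ι κ : Type*}

/-- The assignment `σ` satisfies the clause `C`. A literal is a pair `(v, s)`, which `σ` satisfies
when `σ v = s`, and a clause is a family of literals indexed by `ι`. -/
def SatisfiesClause (σ : V → Bool) (C : ι → V × Bool) : Prop :=
  ∃ j, σ (C j).1 = (C j).2

/-- The assignment `σ` satisfies every clause of the formula `F`, a family of clauses indexed
by `κ`. -/
def Satisfies (σ : V → Bool) (F : κ → ι → V × Bool) : Prop :=
  ∀ i, SatisfiesClause σ (F i)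

variable (V ι κ) in
/-- The unnormalised first moment of the number of satisfying assignments: the number of pairs
`(σ, F)` such that `σ` satisfies `F`. -/
noncomputable def firstMomentCount : ℕ :=
  Nat.card {p : (V → Bool) × (κ → ι → V × Bool) // Satisfies p.1 p.2}

variable (V ι κ) in
/-- The unnormalised second moment of the number of satisfying assignments: the number of triples
`(σ, τ, F)` such that both `σ` and `τ` satisfy `F`. -/
noncomputable def secondMomentCount : ℕ :=
  Nat.card {p : ((V → Bool) × (V → Bool)) × (κ → ι → V × Bool) //
    Satisfies p.1.1 p.2 ∧ Satisfies p.1.2 p.2}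

variable (V ι κ) in
theorem firstMomentCount_pos [Finite V] [Finite ι] [Finite κ] [Nonempty V] [Nonempty ι] :
    0 < firstMomentCount V ι κ := by
  let v := Classical.arbitrary V
  have exists_satisfies : Nonempty {p : (V → Bool) × (κ → ι → V × Bool) // Satisfies p.1 p.2} :=
    ⟨⟨(fun _ ↦ true, fun _ _ ↦ (v, true)), fun _ ↦ ⟨Classical.arbitrary ι, rfl⟩⟩⟩
  exact Nat.card_pos

variable [Fintype V]

/-- The number of variables on which two assignments agree. -/
def agreement (σ τ : V → Bool) : ℕ :=
  #{v | σ v = τ v}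

theorem agreement_self (σ : V → Bool) : agreement σ σ = Fintype.card V := by
  simp [agreement]

theorem agreement_le_card (σ τ : V → Bool) : agreement σ τ ≤ Fintype.card V :=
  card_le_univ _

/-- A literal falsified by both `σ` and `τ` is determined by its variable, on which `σ` and `τ`
must agree. -/
theorem card_falsified_literals (σ τ : V → Bool) :
    Nat.card {l : V × Bool // σ l.1 ≠ l.2 ∧ τ l.1 ≠ l.2} = agreement σ τ := by
  rw [card_subtype_prod fun v s ↦ σ v ≠ s ∧ τ v ≠ s, agreement, card_filter]
  refine sum_congr rfl fun v _ ↦ ?_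
  cases σ v <;> cases τ v <;> simp

variable [Fintype ι]

theorem card_falsified_clauses (σ τ : V → Bool) :
    Nat.card {C : ι → V × Bool // ¬SatisfiesClause σ C ∧ ¬SatisfiesClause τ C} =
      agreement σ τ ^ Fintype.card ι := by
  simp only [SatisfiesClause, not_exists, ← forall_and]
  rw [card_subtype_forall_apply fun l : V × Bool ↦ ¬σ l.1 = l.2 ∧ ¬τ l.1 = l.2,
    card_falsified_literals]

theorem card_falsified_clauses_self (σ : V → Bool) :
    Nat.card {C : ι → V × Bool // ¬SatisfiesClause σ C} = Fintype.card V ^ Fintype.card ι := by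
  simpa only [and_self, agreement_self] using card_falsified_clauses (ι := ι) σ σ

theorem card_satisfied_clauses (σ τ : V → Bool) :
    (Nat.card {C : ι → V × Bool // SatisfiesClause σ C ∧ SatisfiesClause τ C} : ℝ) =
      (2 * Fintype.card V) ^ Fintype.card ι - 2 * Fintype.card V ^ Fintype.card ι +
        agreement σ τ ^ Fintype.card ι := by
  have incl_excl := card_subtype_not_and_not
    (fun C : ι → V × Bool ↦ ¬SatisfiesClause σ C) (fun C ↦ ¬SatisfiesClause τ C)
  have card_clauses : Nat.card (ι → V × Bool) = (2 * Fintype.card V) ^ Fintype.card ι := by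
    rw [Nat.card_fun]
    simp [mul_comm]
  simp only [not_not, card_falsified_clauses, card_falsified_clauses_self, card_clauses]
    at incl_excl
  rw [incl_excl]
  push_cast
  ring

theorem card_satisfied_clauses_self (σ : V → Bool) :
    (Nat.card {C : ι → V × Bool // SatisfiesClause σ C} : ℝ) =
      (2 * Fintype.card V) ^ Fintype.card ι - Fintype.card V ^ Fintype.card ι := by
  have both_equal := card_satisfied_clauses (ι := ι) σ σ
  simp only [and_self, agreement_self] at both_equal
  linarith

variable [Fintype κ]

variable (V ι κ) in
theorem firstMomentCount_eq :
    (firstMomentCount V ι κ : ℝ) =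
      2 ^ Fintype.card V *
        ((2 * Fintype.card V) ^ Fintype.card ι - Fintype.card V ^ Fintype.card ι) ^
          Fintype.card κ := by
  classical
  rw [firstMomentCount, card_subtype_prod Satisfies]
  simp only [Satisfies, card_subtype_forall_apply, Nat.cast_sum, Nat.cast_pow,
    card_satisfied_clauses_self]
  simp

variable (V ι κ) in
theorem secondMomentCount_eq [DecidableEq V] :
    (secondMomentCount V ι κ : ℝ) =
      ∑ σ : V → Bool, ∑ τ : V → Bool,
        ((2 * Fintype.card V) ^ Fintype.card ι - 2 * Fintype.card V ^ Fintype.card ι +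
          (agreement σ τ : ℝ) ^ Fintype.card ι) ^ Fintype.card κ := by
  rw [secondMomentCount,
    card_subtype_prod fun (στ : (V → Bool) × (V → Bool)) F ↦
      Satisfies στ.1 F ∧ Satisfies στ.2 F]
  rw [Fintype.sum_prod_type]
  push_cast
  refine sum_congr rfl fun σ _ ↦ sum_congr rfl fun τ _ ↦ ?_
  simp only [Satisfies, ← forall_and]
  rw [card_subtype_forall_apply fun C : ι → V × Bool ↦
    SatisfiesClause σ C ∧ SatisfiesClause τ C, Nat.cast_pow, card_satisfied_clauses]

end Satisfaction

section PairRatio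

variable {k : ℕ}

/-- The probability that a random `k`-clause is satisfied by two given assignments agreeing on a
fraction `(1 + x) / 2` of the variables, divided by its value for independent events. Meaningful
for `k ≠ 0`; at `k = 0` the division by zero makes it `1`. -/
noncomputable def pairRatio (k : ℕ) (x : ℝ) : ℝ :=
  1 + ((1 + x) ^ k - 1) / (2 ^ k - 1) ^ 2

/-- An exponential rate at which `pairRatio k` grows on `[0, 1]`. With `c = 1 / (2 ^ k - 1) ^ 2` it
is `log (1 + c)`, because `pairRatio k x ≥ 1 + c * x ≥ (1 + c) ^ x` there. -/
noncomputable def pairRatioRate (k : ℕ) : ℝ :=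
  log (1 + 1 / (2 ^ k - 1) ^ 2)

theorem one_le_two_pow_sub_one (hk : k ≠ 0) : (1 : ℝ) ≤ 2 ^ k - 1 := by
  linarith [le_self_pow₀ (one_le_two : (1 : ℝ) ≤ 2) hk]

theorem pairRatioRate_pos (hk : k ≠ 0) : 0 < pairRatioRate k := by
  have := one_le_two_pow_sub_one hk
  exact log_pos (lt_add_of_pos_right 1 (by positivity))

theorem mul_satisfied_eq_sq_mul_pairRatio {n : ℝ} (hk : k ≠ 0) (hn : n ≠ 0) (a : ℝ) :
    (2 * n) ^ k * ((2 * n) ^ k - 2 * n ^ k + a ^ k) =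
      ((2 * n) ^ k - n ^ k) ^ 2 * pairRatio k (2 * a / n - 1) := by
  have h2k : (2 : ℝ) ^ k - 1 ≠ 0 := by linarith [one_le_two_pow_sub_one hk]
  rw [pairRatio, add_sub_cancel, div_pow, mul_pow, mul_pow]
  field_simp
  ring

theorem pairRatio_nonneg (hk : k ≠ 0) {x : ℝ} (hx : -1 ≤ x) : 0 ≤ pairRatio k x := by
  have h2k := one_le_two_pow_sub_one hk
  have numerator_ge : -1 ≤ (1 + x) ^ k - 1 := by
    linarith [pow_nonneg (neg_le_iff_add_nonneg'.1 hx) k]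
  have : -1 ≤ ((1 + x) ^ k - 1) / (2 ^ k - 1) ^ 2 := by
    rw [le_div_iff₀ (by positivity)]
    nlinarith
  unfold pairRatio
  linarith

theorem exp_rate_mul_le_pairRatio (hk : k ≠ 0) {x : ℝ} (hx₀ : 0 ≤ x) (hx₁ : x ≤ 1) :
    exp (pairRatioRate k * x) ≤ pairRatio k x := by
  have base_pos : (0 : ℝ) < 1 + 1 / (2 ^ k - 1) ^ 2 := by positivity
  calc exp (pairRatioRate k * x)
      = (1 + 1 / (2 ^ k - 1) ^ 2) ^ x := by rw [rpow_def_of_pos base_pos, pairRatioRate]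
    _ ≤ 1 + x * (1 / (2 ^ k - 1) ^ 2) :=
        rpow_one_add_le_one_add_mul_self (by linarith) hx₀ hx₁
    _ = 1 + ((1 + x) - 1) / (2 ^ k - 1) ^ 2 := by ring
    _ ≤ pairRatio k x := by
        unfold pairRatio
        gcongr
        exact le_self_pow₀ (by linarith) hk

theorem exp_sub_one_le_pairRatio_pow (hk : k ≠ 0) (m : ℕ) {x : ℝ} (hx₀ : -1 ≤ x)
    (hx₁ : x ≤ 1) : exp (m * (pairRatioRate k * x)) - 1 ≤ pairRatio k x ^ m := by
  rcases le_total x 0 with hx | hx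
  · have exp_le_one : exp (m * (pairRatioRate k * x)) ≤ 1 :=
      exp_le_one_iff.2 <| mul_nonpos_of_nonneg_of_nonpos m.cast_nonneg <|
        mul_nonpos_of_nonneg_of_nonpos (pairRatioRate_pos hk).le hx
    linarith [pow_nonneg (pairRatio_nonneg hk hx₀) m]
  · calc exp (m * (pairRatioRate k * x)) - 1
        ≤ exp (pairRatioRate k * x) ^ m := by rw [exp_nat_mul]; linarith
      _ ≤ pairRatio k x ^ m := by
        gcongr
        exact exp_rate_mul_le_pairRatio hk hx hx₁

end PairRatio

section SecondMoment

variable {V : Type*} [Fintype V]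

theorem two_mul_agreement_sub_card (σ τ : V → Bool) :
    2 * (agreement σ τ : ℝ) - Fintype.card V = ∑ v, if σ v = τ v then 1 else -1 := by
  have sign_eq (v : V) :
      (if σ v = τ v then 1 else -1 : ℝ) = 2 * (if σ v = τ v then 1 else 0) - 1 := by
    split_ifs <;> norm_num
  simp only [sign_eq, sum_sub_distrib, ← mul_sum, sum_boole]
  simp [agreement]

theorem sum_exp_agreement [DecidableEq V] (σ : V → Bool) (t : ℝ) :
    ∑ τ : V → Bool, exp (t * (2 * agreement σ τ - Fintype.card V)) =
      (2 * cosh t) ^ Fintype.card V := by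
  have sum_sign (v : V) : ∑ s, exp (t * if σ v = s then 1 else -1) = 2 * cosh t := by
    rw [cosh_eq]
    cases σ v <;> simp <;> ring
  calc ∑ τ : V → Bool, exp (t * (2 * agreement σ τ - Fintype.card V))
      = ∑ τ : V → Bool, ∏ v, exp (t * if σ v = τ v then 1 else -1) := by
        simp only [two_mul_agreement_sub_card, mul_sum, exp_sum]
    _ = ∏ v, ∑ s, exp (t * if σ v = s then 1 else -1) :=
        (Fintype.prod_sum fun v s ↦ exp (t * if σ v = s then 1 else -1)).symm
    _ = (2 * cosh t) ^ Fintype.card V := by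
        simp only [sum_sign, prod_const, card_univ]

variable [Nonempty V]

theorem exp_agreement_sub_one_le_pairRatio_pow {k : ℕ} (hk : k ≠ 0) (m : ℕ) (σ τ : V → Bool) :
    exp (pairRatioRate k * (m / Fintype.card V) * (2 * agreement σ τ - Fintype.card V)) - 1 ≤
      pairRatio k (2 * agreement σ τ / Fintype.card V - 1) ^ m := by
  have card_pos : (0 : ℝ) < Fintype.card V := by exact_mod_cast Fintype.card_pos
  have agreement_le : (agreement σ τ : ℝ) ≤ Fintype.card V := by
    exact_mod_cast agreement_le_card σ τ
  have correlation_ge : -1 ≤ 2 * (agreement σ τ : ℝ) / Fintype.card V - 1 := by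
    have : 0 ≤ 2 * (agreement σ τ : ℝ) / Fintype.card V := by positivity
    linarith
  have correlation_le : 2 * (agreement σ τ : ℝ) / Fintype.card V - 1 ≤ 1 := by
    rw [sub_le_iff_le_add, div_le_iff₀ card_pos]
    linarith
  convert exp_sub_one_le_pairRatio_pow hk m correlation_ge correlation_le using 3
  field_simp

variable {ι κ : Type*} [Fintype ι] [Fintype κ] [Nonempty ι]

theorem mul_secondMomentCount_eq [DecidableEq V] :
    (2 * Fintype.card V : ℝ) ^ (Fintype.card ι * Fintype.card κ) * secondMomentCount V ι κ =
      (((2 * Fintype.card V) ^ Fintype.card ι - Fintype.card V ^ Fintype.card ι) ^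
        Fintype.card κ) ^ 2 *
        ∑ σ : V → Bool, ∑ τ : V → Bool,
          pairRatio (Fintype.card ι) (2 * agreement σ τ / Fintype.card V - 1) ^
            Fintype.card κ := by
  have card_ne_zero : (Fintype.card V : ℝ) ≠ 0 := by exact_mod_cast Fintype.card_ne_zero
  simp only [secondMomentCount_eq, pow_mul, mul_sum, ← mul_pow,
    mul_satisfied_eq_sq_mul_pairRatio Fintype.card_ne_zero card_ne_zero, pow_right_comm _ _ 2]

variable (V ι κ) in
theorem cosh_pow_sub_one_mul_sq_firstMomentCount_le :
    (cosh (pairRatioRate (Fintype.card ι) * (Fintype.card κ / Fintype.card V)) ^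
        Fintype.card V - 1) * (firstMomentCount V ι κ : ℝ) ^ 2 ≤
      (2 * Fintype.card V : ℝ) ^ (Fintype.card ι * Fintype.card κ) *
        secondMomentCount V ι κ := by
  classical
  set t := pairRatioRate (Fintype.card ι) * (Fintype.card κ / Fintype.card V)
  have sum_exp_sub_one :
      ∑ σ : V → Bool, ∑ τ : V → Bool, (exp (t * (2 * agreement σ τ - Fintype.card V)) - 1) =
        (2 ^ Fintype.card V) ^ 2 * (cosh t ^ Fintype.card V - 1) := by
    simp only [sum_sub_distrib, sum_exp_agreement, mul_pow, sum_const, card_univ,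
      Fintype.card_fun, Fintype.card_bool, nsmul_eq_mul, Nat.cast_pow, Nat.cast_ofNat]
    ring
  rw [mul_secondMomentCount_eq, firstMomentCount_eq, mul_pow, mul_comm, mul_right_comm,
    ← sum_exp_sub_one, mul_comm]
  gcongr with σ _ τ _
  exact exp_agreement_sub_one_le_pairRatio_pow Fintype.card_ne_zero _ σ τ

end SecondMoment

section Growth

theorem exists_eventually_pow_lt_pow_sub_one {b : ℝ} (hb : 1 < b) :
    ∃ β : ℝ, 0 < β ∧ ∀ᶠ n : ℕ in atTop, (1 + β) ^ n < b ^ n - 1 := by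
  have one_lt_sqrt : 1 < √b := by simpa using sqrt_lt_sqrt zero_le_one hb
  refine ⟨√b - 1, sub_pos.2 one_lt_sqrt, ?_⟩
  filter_upwards [(tendsto_pow_atTop_atTop_of_one_lt one_lt_sqrt).eventually_gt_atTop 2]
    with n two_lt
  have pow_eq : b ^ n = (√b ^ n) ^ 2 := by rw [pow_right_comm, sq_sqrt (by linarith)]
  rw [add_sub_cancel]
  nlinarith

theorem eventually_half_le_floor_mul_div {r : ℝ} (hr : 0 < r) :
    ∀ᶠ n : ℕ in atTop, r / 2 ≤ (⌊r * n⌋₊ : ℝ) / n :=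
  ((tendsto_nat_floor_mul_div_atTop hr.le).comp tendsto_natCast_atTop_atTop).eventually_const_le
    (half_lt_self hr)

theorem exists_eventually_pow_lt_cosh_pow_sub_one {a r : ℝ} (ha : 0 < a) (hr : 0 < r) :
    ∃ β : ℝ, 0 < β ∧
      ∀ᶠ n : ℕ in atTop, (1 + β) ^ n < cosh (a * (⌊r * n⌋₊ / n)) ^ n - 1 := by
  have one_lt_base : 1 < cosh (a * (r / 2)) := one_lt_cosh.2 (by positivity)
  obtain ⟨β, hβ, eventually_lt⟩ := exists_eventually_pow_lt_pow_sub_one one_lt_base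
  refine ⟨β, hβ, ?_⟩
  filter_upwards [eventually_lt, eventually_half_le_floor_mul_div hr] with n pow_lt density_ge
  have base_le : cosh (a * (r / 2)) ≤ cosh (a * (⌊r * n⌋₊ / n)) := by
    rw [cosh_le_cosh, abs_of_nonneg (by positivity), abs_of_nonneg (by positivity)]
    gcongr
  exact pow_lt.trans_le (by gcongr)

end Growth

end RandomSAT

open RandomSAT

/-- Failure of the naive second moment for random `k`-SAT: for every `k ≥ 1` and
`r > 0` there exist `β > 0` and `n₀` such that for all `n ≥ n₀`, with `m = ⌊rn⌋`,
`(2n)^(km) · T(n,m) > (1+β)^n · P(n,m)²`, where `T` counts triples `(σ, τ, F)` with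
both assignments satisfying the clause sequence `F`, and `P` counts pairs `(σ, F)`
with `σ` satisfying `F`. -/
theorem naive_second_moment_fails (k : ℕ) (hk : 1 ≤ k) (r : ℝ) (hr : 0 < r) :
    ∃ β : ℝ, 0 < β ∧ ∃ n₀ : ℕ, ∀ n : ℕ, n₀ ≤ n →
      (2 * (n : ℝ)) ^ (k * ⌊r * (n : ℝ)⌋₊) *
          (Nat.card {p : ((Fin n → Bool) × (Fin n → Bool)) ×
              (Fin ⌊r * (n : ℝ)⌋₊ → Fin k → Fin n × Bool) //
              (∀ i, ∃ j, p.1.1 (p.2 i j).1 = (p.2 i j).2) ∧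
              (∀ i, ∃ j, p.1.2 (p.2 i j).1 = (p.2 i j).2)} : ℝ) >
        (1 + β) ^ n *
          (Nat.card {p : (Fin n → Bool) × (Fin ⌊r * (n : ℝ)⌋₊ → Fin k → Fin n × Bool) //
              ∀ i, ∃ j, p.1 (p.2 i j).1 = (p.2 i j).2} : ℝ) ^ 2 := by
  obtain ⟨β, hβ, eventually_lt⟩ :=
    exists_eventually_pow_lt_cosh_pow_sub_one (pairRatioRate_pos (by omega : k ≠ 0)) hr
  refine ⟨β, hβ, eventually_atTop.1 ?_⟩
  filter_upwards [eventually_lt, eventually_gt_atTop 0] with n pow_lt hn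
  have : Nonempty (Fin n) := Fin.pos_iff_nonempty.1 hn
  have : Nonempty (Fin k) := Fin.pos_iff_nonempty.1 hk
  set m := ⌊r * (n : ℝ)⌋₊
  have first_pos := firstMomentCount_pos (Fin n) (Fin k) (Fin m)
  have second_ge := cosh_pow_sub_one_mul_sq_firstMomentCount_le (Fin n) (Fin k) (Fin m)
  simp only [Fintype.card_fin] at second_ge
  calc (1 + β) ^ n * (firstMomentCount (Fin n) (Fin k) (Fin m) : ℝ) ^ 2
      < (cosh (pairRatioRate k * (m / n)) ^ n - 1) *
          (firstMomentCount (Fin n) (Fin k) (Fin m) : ℝ) ^ 2 := by gcongr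
    _ ≤ (2 * (n : ℝ)) ^ (k * m) * secondMomentCount (Fin n) (Fin k) (Fin m) := second_ge
end

section
/- For every real ε > 0 there exists k₀ = k₀(ε) such that for every integer k ≥ k₀ and every real r with 0 < r < 2^(k-1)·ln 2 − (1 + ln 2)/2 − ε: setting m = ⌊rn⌋, the fraction of sequences F of m ordered k-clauses on n variables (out of all (2n)^(km) such sequences) that are NAE-satisfiable has lim inf strictly greater than 0 as n → ∞. -/
/-!
The proof is the second moment method, applied to the number of satisfying assignments of a
uniformly random formula. The probability that two assignments `σ, τ` both satisfy a random clause
depends only on the fraction `x` of variables on which they differ, so Cauchy-Schwarz bounds the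
satisfiable fraction from below by the inverse of `∑ d, C(n, d) 2⁻ⁿ Q(d / n)ᵐ`, where `Q(x)` is the
joint probability divided by the product of the marginal ones. We show that this sum is at most `8`.

By the symmetry `x ↦ 1 - x` it suffices to treat `x ≤ 1 / 2`.
* For `1 / (2k) ≤ x` the exponent `r log Q(x)` is at most `(15 / 8) (x - 1 / 2) ^ 2`. As the
  coefficient is less than `2`, the binomial distribution integrates the resulting Gaussian to at
  most `4`.
* For `x ≤ 1 / k ^ 3` it is at most `log 2 - E - A x`, where `E` is the growth rate of the expected
  number of satisfying assignments and `A` is close to `k log 2`. The threshold on `r` is what makes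
  `exp (-A) ≤ E`, whence `∑ d, C(n, d) exp (-E n - A d) = (exp (-E) (1 + exp (-A))) ^ n ≤ 1`.
* In between, cruder constants in the same linear bound suffice.
-/

namespace NAESat

open Finset Filter Topology

section Counting

theorem sq_sum_natCard_le {S Ω : Type*} [Fintype S] [Finite Ω] (P : S → Ω → Prop) :
    (∑ s, (Nat.card {ω // P s ω} : ℝ)) ^ 2 ≤
      Nat.card {ω // ∃ s, P s ω} * ∑ s, ∑ t, (Nat.card {ω // P s ω ∧ P t ω} : ℝ) := by
  classical
  have := Fintype.ofFinite Ω
  simp only [Nat.card_eq_fintype_card, Fintype.card_subtype]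
  let X : Ω → ℝ := fun ω => ∑ s, if P s ω then 1 else 0
  have first_moment : ∑ s, (#{ω | P s ω} : ℝ) = ∑ ω with ∃ s, P s ω, X ω := by
    rw [sum_filter_of_ne, sum_comm]
    · simp only [natCast_card_filter]
    · intro ω _ hω
      obtain ⟨s, -, hs⟩ := exists_ne_zero_of_sum_ne_zero hω
      exact ⟨s, of_not_not fun h => hs (if_neg h)⟩
  have second_moment : ∑ s, ∑ t, (#{ω | P s ω ∧ P t ω} : ℝ) = ∑ ω, X ω ^ 2 := by
    simp only [X, sq, sum_mul_sum, natCast_card_filter, ite_and, ite_mul, one_mul, zero_mul]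
    rw [sum_comm (s := univ (α := Ω))]
    exact sum_congr rfl fun s _ => sum_comm
  calc (∑ s, (#{ω | P s ω} : ℝ)) ^ 2
      ≤ #{ω | ∃ s, P s ω} * ∑ ω with ∃ s, P s ω, X ω ^ 2 := by
        rw [first_moment]; exact sq_sum_le_card_mul_sum_sq
    _ ≤ #{ω | ∃ s, P s ω} * ∑ ω, X ω ^ 2 := by
        gcongr
        exact filter_subset _ _
    _ = _ := by rw [second_moment]

theorem natCard_forall {α κ : Type*} [Finite κ] (p : α → Prop) :
    Nat.card {F : κ → α // ∀ i, p (F i)} = Nat.card {a // p a} ^ Nat.card κ := by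
  rw [Nat.card_congr Equiv.subtypePiEquivPi, Nat.card_fun]

variable {V ι κ α : Type*}

/-- The tuple `c` takes values both inside and outside of `A`. NAE-satisfaction is the case where
`A` is the set of true literals. -/
def Splits (A : Finset α) (c : ι → α) : Prop :=
  (∃ j, c j ∈ A) ∧ ∃ j, c j ∉ A

theorem ite_splits_eq [Fintype ι] [Nonempty ι] [Fintype α] [DecidableEq α] (A : Finset α)
    (c : ι → α) [Decidable (Splits A c)] :
    (if Splits A c then 1 else 0 : ℝ) =
      1 - (∏ j, if c j ∈ A then 1 else 0) - ∏ j, if c j ∈ Aᶜ then 1 else 0 := by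
  simp only [prod_boole, mem_univ, forall_const, mem_compl]
  by_cases all_mem : ∀ j, c j ∈ A
  · simp [Splits, all_mem]
  by_cases all_notMem : ∀ j, c j ∉ A
  · simp [Splits, all_notMem]
  have hc : Splits A c := by simpa [Splits, and_comm] using And.intro all_mem all_notMem
  simp [hc, all_mem, all_notMem]

theorem sum_prod_ite_mem [Fintype ι] [DecidableEq ι] [Fintype α] [DecidableEq α] (A : Finset α) :
    ∑ c : ι → α, ∏ j, (if c j ∈ A then 1 else 0 : ℝ) = #A ^ Fintype.card ι := by
  rw [← Fintype.piFinset_univ,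
    ← prod_univ_sum (fun _ => univ) fun _ a => if a ∈ A then (1 : ℝ) else 0]
  simp

theorem natCard_splits_and_splits [Fintype ι] [Nonempty ι] [Fintype α] [DecidableEq α]
    (A B : Finset α) :
    (Nat.card {c : ι → α // Splits A c ∧ Splits B c} : ℝ) =
      (Fintype.card α : ℝ) ^ Fintype.card ι
      - #A ^ Fintype.card ι - #Aᶜ ^ Fintype.card ι - #B ^ Fintype.card ι - #Bᶜ ^ Fintype.card ι
      + #(A ∩ B) ^ Fintype.card ι + #(A ∩ Bᶜ) ^ Fintype.card ι
      + #(Aᶜ ∩ B) ^ Fintype.card ι + #(Aᶜ ∩ Bᶜ) ^ Fintype.card ι := by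
  classical
  let allIn (A : Finset α) (c : ι → α) : ℝ := ∏ j, if c j ∈ A then 1 else 0
  have allIn_mul (A B : Finset α) (c : ι → α) : allIn A c * allIn B c = allIn (A ∩ B) c := by
    simp only [allIn, ← prod_mul_distrib, mem_inter, ite_zero_mul_ite_zero, mul_one]
  have sum_allIn (A : Finset α) : ∑ c, allIn A c = #A ^ Fintype.card ι := sum_prod_ite_mem A
  have indicator (c : ι → α) : (if Splits A c ∧ Splits B c then 1 else 0 : ℝ) =
      1 - allIn A c - allIn Aᶜ c - allIn B c - allIn Bᶜ c
      + allIn (A ∩ B) c + allIn (A ∩ Bᶜ) c + allIn (Aᶜ ∩ B) c + allIn (Aᶜ ∩ Bᶜ) c := by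
    calc (if Splits A c ∧ Splits B c then 1 else 0 : ℝ)
        = (1 - allIn A c - allIn Aᶜ c) * (1 - allIn B c - allIn Bᶜ c) := by
          rw [← mul_one (1 : ℝ), ← ite_zero_mul_ite_zero, ite_splits_eq, ite_splits_eq]
          simp only [mul_one, allIn]
      _ = _ := by
          simp only [← allIn_mul]
          ring
  rw [Nat.card_eq_fintype_card, Fintype.card_subtype, natCast_card_filter]
  simp only [indicator, sum_add_distrib, sum_sub_distrib, sum_allIn]
  simp

/-- The assignment `σ` NAE-satisfies the clause `c`. -/
def Satisfies (σ : V → Bool) (c : ι → V × Bool) : Prop :=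
  (∃ j, σ (c j).1 = (c j).2) ∧ ∃ j, σ (c j).1 ≠ (c j).2

/-- Some assignment NAE-satisfies every clause of the formula `F`. -/
def Satisfiable (F : κ → ι → V × Bool) : Prop :=
  ∃ σ : V → Bool, ∀ i, Satisfies σ (F i)

variable [Fintype V]

/-- The literals satisfied by the assignment `σ`. -/
def trueLiterals (σ : V → Bool) : Finset (V × Bool) := {l | σ l.1 = l.2}

theorem satisfies_iff_splits (σ : V → Bool) (c : ι → V × Bool) :
    Satisfies σ c ↔ Splits (trueLiterals σ) c := by
  simp [Satisfies, Splits, trueLiterals]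

theorem card_filter_eq (σ τ : V → Bool) :
    (#{v | σ v = τ v} : ℝ) = Fintype.card V - hammingDist σ τ := by
  have := card_filter_add_card_filter_not (s := univ) fun v => σ v = τ v
  rw [eq_sub_iff_add_eq, hammingDist]
  exact_mod_cast this

theorem card_trueLiterals_inter [DecidableEq V] (σ τ : V → Bool) :
    (#(trueLiterals σ ∩ trueLiterals τ) : ℝ) = Fintype.card V - hammingDist σ τ := by
  rw [← card_filter_eq, trueLiterals, trueLiterals, ← filter_and, natCast_card_filter,
    Fintype.sum_prod_type, natCast_card_filter]
  refine sum_congr rfl fun v _ => ?_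
  cases hσ : σ v <;> cases hτ : τ v <;> simp [hσ, hτ]

theorem trueLiterals_compl [DecidableEq V] (σ : V → Bool) :
    (trueLiterals σ)ᶜ = trueLiterals fun v => !σ v := by
  ext ⟨v, s⟩
  cases s <;> simp [trueLiterals]

theorem hammingDist_not_right (σ τ : V → Bool) :
    (hammingDist σ fun v => !τ v : ℝ) = Fintype.card V - hammingDist σ τ := by
  rw [← card_filter_eq, hammingDist]
  simp

theorem sum_hammingDist [DecidableEq V] (σ : V → Bool) (f : ℕ → ℝ) :
    ∑ τ, f (hammingDist σ τ) =
      ∑ d ∈ range (Fintype.card V + 1), ((Fintype.card V).choose d : ℝ) * f d := by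
  calc ∑ τ, f (hammingDist σ τ) = ∑ D ∈ (univ : Finset V).powerset, f #D := by
        refine sum_nbij' (fun τ => univ.filter fun v => σ v ≠ τ v)
          (fun D v => if v ∈ D then !σ v else σ v)
          (by simp) (by simp) (fun τ _ => ?_) (fun D _ => ?_) (fun _ _ => rfl)
        · ext v
          by_cases h : σ v = τ v
          · simp [h]
          · simp [Bool.eq_not_of_ne (Ne.symm h)]
        · ext v
          by_cases h : v ∈ D <;> simp [h]
    _ = _ := by simp only [sum_powerset_apply_card, card_univ, nsmul_eq_mul]

end Counting

section Moments

variable {V ι : Type*} [Fintype V] [Fintype ι]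

/-- The probability that a fixed assignment fails to NAE-satisfy a uniformly random `k`-clause
(for `k ≠ 0`). -/
noncomputable def violProb (k : ℕ) : ℝ := 2 * (1 / 2) ^ k

/-- The probability that `k` independent Bernoulli variables of parameter `x` all agree
(for `k ≠ 0`). -/
noncomputable def monoProb (k : ℕ) (x : ℝ) : ℝ := (1 - x) ^ k + x ^ k

/-- The probability that two assignments that differ on a fraction `x` of the variables both
NAE-satisfy a uniformly random `k`-clause. -/
noncomputable def jointProb (k : ℕ) (x : ℝ) : ℝ :=
  1 - 2 * violProb k + violProb k * monoProb k x

/-- The factor by which correlation between the two assignments inflates `jointProb`. -/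
noncomputable def correlationRatio (k : ℕ) (x : ℝ) : ℝ := jointProb k x / (1 - violProb k) ^ 2

theorem natCard_satisfies_and_satisfies [Nonempty V] [Nonempty ι] (σ τ : V → Bool) :
    (Nat.card {c : ι → V × Bool // Satisfies σ c ∧ Satisfies τ c} : ℝ) =
      (2 * Fintype.card V : ℝ) ^ Fintype.card ι *
        jointProb (Fintype.card ι) (hammingDist σ τ / Fintype.card V) := by
  classical
  have hV : (Fintype.card V : ℝ) ≠ 0 := by positivity
  have card_true (ρ : V → Bool) : (#(trueLiterals ρ) : ℝ) = Fintype.card V := by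
    rw [← inter_self (trueLiterals ρ), card_trueLiterals_inter, hammingDist_self]
    simp
  simp only [satisfies_iff_splits, natCard_splits_and_splits, trueLiterals_compl, card_true,
    card_trueLiterals_inter, hammingDist_not_right, hammingDist_comm _ τ]
  simp only [Fintype.card_prod, Fintype.card_bool, hammingDist_comm τ, jointProb, violProb,
    monoProb, one_sub_div hV, div_pow, mul_pow]
  push_cast
  field_simp
  ring

theorem jointProb_zero {k : ℕ} (hk : k ≠ 0) : jointProb k 0 = 1 - violProb k := by
  rw [jointProb, monoProb, sub_zero, one_pow, zero_pow hk]
  ring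

theorem natCard_satisfies [Nonempty V] [Nonempty ι] (σ : V → Bool) :
    (Nat.card {c : ι → V × Bool // Satisfies σ c} : ℝ) =
      (2 * Fintype.card V : ℝ) ^ Fintype.card ι * (1 - violProb (Fintype.card ι)) := by
  simpa [jointProb_zero] using natCard_satisfies_and_satisfies (ι := ι) σ σ

theorem violProb_lt_one {k : ℕ} (hk : 2 ≤ k) : violProb k < 1 := by
  have : ((1 : ℝ) / 2) ^ k ≤ (1 / 2) ^ 2 := pow_le_pow_of_le_one (by norm_num) (by norm_num) hk
  unfold violProb
  linarith

theorem natCard_forall_satisfies [Nonempty V] [Nonempty ι] (κ : Type*) [Fintype κ]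
    (σ : V → Bool) :
    (Nat.card {F : κ → ι → V × Bool // ∀ i, Satisfies σ (F i)} : ℝ) =
      ((2 * Fintype.card V : ℝ) ^ Fintype.card ι *
        (1 - violProb (Fintype.card ι))) ^ Fintype.card κ := by
  rw [natCard_forall, Nat.cast_pow, natCard_satisfies, Nat.card_eq_fintype_card]

theorem natCard_forall_satisfies_and_forall_satisfies [Nonempty V] [Nonempty ι] (κ : Type*)
    [Fintype κ] (σ τ : V → Bool) :
    (Nat.card {F : κ → ι → V × Bool //
        (∀ i, Satisfies σ (F i)) ∧ ∀ i, Satisfies τ (F i)} : ℝ) =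
      ((2 * Fintype.card V : ℝ) ^ Fintype.card ι *
        jointProb (Fintype.card ι) (hammingDist σ τ / Fintype.card V)) ^ Fintype.card κ := by
  simp only [← forall_and]
  rw [natCard_forall fun c : ι → V × Bool => Satisfies σ c ∧ Satisfies τ c, Nat.cast_pow,
    natCard_satisfies_and_satisfies, Nat.card_eq_fintype_card]

variable (V ι) in
theorem sq_firstMoment_le (κ : Type*) [Fintype κ] [Nonempty V] [Nonempty ι] :
    (2 ^ Fintype.card V * ((2 * Fintype.card V : ℝ) ^ Fintype.card ι *
        (1 - violProb (Fintype.card ι))) ^ Fintype.card κ) ^ 2 ≤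
      Nat.card {F : κ → ι → V × Bool // Satisfiable F} *
        (2 ^ Fintype.card V * ∑ d ∈ range (Fintype.card V + 1), ((Fintype.card V).choose d : ℝ) *
          ((2 * Fintype.card V : ℝ) ^ Fintype.card ι *
            jointProb (Fintype.card ι) (d / Fintype.card V)) ^ Fintype.card κ) := by
  classical
  have cauchy_schwarz := sq_sum_natCard_le
    fun (σ : V → Bool) (F : κ → ι → V × Bool) => ∀ i, Satisfies σ (F i)
  simp only [natCard_forall_satisfies, natCard_forall_satisfies_and_forall_satisfies,
    sum_hammingDist _ fun d => ((2 * Fintype.card V : ℝ) ^ Fintype.card ι *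
    jointProb (Fintype.card ι) (d / Fintype.card V)) ^ Fintype.card κ] at cauchy_schwarz
  simpa only [Satisfiable, sum_const, card_univ, Fintype.card_fun,
    Fintype.card_bool, nsmul_eq_mul, Nat.cast_pow, Nat.cast_ofNat] using cauchy_schwarz

variable (V ι) in
theorem pow_le_natCard_satisfiable_mul (κ : Type*) [Fintype κ] [Nonempty V]
    (hι : 2 ≤ Fintype.card ι) :
    (2 * Fintype.card V : ℝ) ^ (Fintype.card ι * Fintype.card κ) ≤
      Nat.card {F : κ → ι → V × Bool // Satisfiable F} *
        ∑ d ∈ range (Fintype.card V + 1), ((Fintype.card V).choose d : ℝ) *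
          (1 / 2) ^ Fintype.card V *
            correlationRatio (Fintype.card ι) (d / Fintype.card V) ^ Fintype.card κ := by
  have : Nonempty ι := Fintype.card_pos_iff.1 (by lia)
  have moments := sq_firstMoment_le V ι κ
  set n := Fintype.card V
  set k := Fintype.card ι
  set m := Fintype.card κ
  set T : ℝ := (2 * n : ℝ) ^ k
  set q : ℝ := 1 - violProb k
  have hT : 0 < T := by positivity
  have hq : 0 < q := sub_pos.2 (violProb_lt_one hι)
  have term (d : ℕ) : (n.choose d : ℝ) * (T * jointProb k (d / n)) ^ m =
      2 ^ n * (T * q ^ 2) ^ m *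
        ((n.choose d : ℝ) * (1 / 2) ^ n * correlationRatio k (d / n) ^ m) := by
    have hjoint : jointProb k (d / n) = q ^ 2 * correlationRatio k (d / n) := by
      rw [correlationRatio, mul_div_cancel₀ _ (by positivity)]
    rw [hjoint, ← mul_assoc, mul_pow (T * q ^ 2), one_div, inv_pow]
    field_simp
  simp only [term, ← mul_sum] at moments
  rw [pow_mul]
  refine le_of_mul_le_mul_left ?_ (show 0 < (2 ^ n) ^ 2 * (T * q ^ 2) ^ m by positivity)
  calc _ = (2 ^ n * (T * q) ^ m) ^ 2 := by simp only [mul_pow, ← pow_mul]; ring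
    _ ≤ _ := moments
    _ = _ := by ring

end Moments

section ExponentialSums

open MeasureTheory Real

theorem exp_neg_half_sq_add (s g : ℝ) :
    exp (-(1 / 2) * g ^ 2 + s * g) = exp (s ^ 2 / 2) * exp (-(1 / 2) * (g - s) ^ 2) := by
  rw [← exp_add]
  ring_nf

theorem integrable_exp_neg_half_sq_add (s : ℝ) :
    Integrable fun g : ℝ => exp (-(1 / 2) * g ^ 2 + s * g) := by
  simp only [exp_neg_half_sq_add]
  exact ((integrable_exp_neg_mul_sq one_half_pos).comp_sub_right s).const_mul _

theorem integral_exp_neg_half_sq_add (s : ℝ) :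
    ∫ g : ℝ, exp (-(1 / 2) * g ^ 2 + s * g) = exp (s ^ 2 / 2) * √(2 * π) := by
  simp only [exp_neg_half_sq_add]
  rw [integral_const_mul, integral_sub_right_eq_self fun g : ℝ => exp (-(1 / 2) * g ^ 2),
    integral_gaussian, one_div, div_inv_eq_mul, mul_comm π]

/- Writing `exp (b * x ^ 2)` as the Gaussian average of `exp (√(2 * b) * g * x)` over `g` turns the
moment generating function bound into a Gaussian integral. -/
theorem sum_mul_exp_mul_sq_le {S : Type*} (s : Finset S) (p x : S → ℝ) {b v : ℝ} (hb : 0 ≤ b)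
    (hbv : 2 * b * v < 1) (hmgf : ∀ y, ∑ i ∈ s, p i * exp (y * x i) ≤ exp (v * y ^ 2 / 2)) :
    ∑ i ∈ s, p i * exp (b * x i ^ 2) ≤ (√(1 - 2 * b * v))⁻¹ := by
  have integrable (i : S) :
      Integrable fun g : ℝ => p i * exp (-(1 / 2) * g ^ 2 + √(2 * b) * x i * g) :=
    (integrable_exp_neg_half_sq_add _).const_mul _
  have gaussian_average (i : S) : p i * exp (b * x i ^ 2) * √(2 * π) =
      ∫ g : ℝ, p i * exp (-(1 / 2) * g ^ 2 + √(2 * b) * x i * g) := by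
    rw [integral_const_mul, integral_exp_neg_half_sq_add, mul_pow, sq_sqrt (by positivity)]
    ring_nf
  have integrand_le (g : ℝ) :
      ∑ i ∈ s, p i * exp (-(1 / 2) * g ^ 2 + √(2 * b) * x i * g) ≤
        exp (-((1 - 2 * b * v) / 2) * g ^ 2) := by
    calc ∑ i ∈ s, p i * exp (-(1 / 2) * g ^ 2 + √(2 * b) * x i * g)
        = exp (-(1 / 2) * g ^ 2) * ∑ i ∈ s, p i * exp (√(2 * b) * g * x i) := by
          rw [mul_sum]
          refine sum_congr rfl fun i _ => ?_
          rw [exp_add]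
          ring_nf
      _ ≤ exp (-(1 / 2) * g ^ 2) * exp (v * (√(2 * b) * g) ^ 2 / 2) := by
          gcongr
          exact hmgf _
      _ = _ := by
          rw [← exp_add, mul_pow, sq_sqrt (by positivity)]
          ring_nf
  refine le_of_mul_le_mul_right ?_ (show 0 < √(2 * π) by positivity)
  calc (∑ i ∈ s, p i * exp (b * x i ^ 2)) * √(2 * π)
      = ∫ g : ℝ, ∑ i ∈ s, p i * exp (-(1 / 2) * g ^ 2 + √(2 * b) * x i * g) := by
        rw [integral_finsetSum _ fun i _ => integrable i, sum_mul]
        exact sum_congr rfl fun i _ => gaussian_average i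
    _ ≤ ∫ g : ℝ, exp (-((1 - 2 * b * v) / 2) * g ^ 2) :=
        integral_mono (integrable_finsetSum _ fun i _ => integrable i)
          (integrable_exp_neg_mul_sq (by linarith)) integrand_le
    _ = (√(1 - 2 * b * v))⁻¹ * √(2 * π) := by
        rw [integral_gaussian, ← sqrt_inv, ← sqrt_mul' _ (by positivity)]
        congr 1
        field_simp

theorem sum_choose_mul_exp_eq_cosh_pow (n : ℕ) (y : ℝ) :
    ∑ d ∈ range (n + 1), (n.choose d : ℝ) * (1 / 2) ^ n * exp (y * (d - n / 2)) =
      cosh (y / 2) ^ n := by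
  rw [cosh_eq, add_div, add_pow]
  refine sum_congr rfl fun d hd => ?_
  obtain ⟨c, rfl⟩ := Nat.exists_eq_add_of_le (mem_range_succ_iff.1 hd)
  have split : y * ((d : ℝ) - (d + c : ℕ) / 2) = d * (y / 2) + c * -(y / 2) := by
    push_cast
    ring
  rw [Nat.add_sub_cancel_left, split, exp_add, exp_nat_mul, exp_nat_mul]
  simp only [div_pow, one_pow, pow_add]
  ring

theorem sum_choose_mul_exp_sq_le {n : ℕ} (hn : n ≠ 0) {a : ℝ} (ha₀ : 0 ≤ a) (ha₂ : a < 2) :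
    ∑ d ∈ range (n + 1), (n.choose d : ℝ) * (1 / 2) ^ n * exp (a / n * (d - n / 2) ^ 2) ≤
      (√(1 - a / 2))⁻¹ := by
  have hn' : (n : ℝ) ≠ 0 := Nat.cast_ne_zero.2 hn
  have variance : 2 * (a / n) * (n / 4) = a / 2 := by
    field_simp
    ring
  rw [← variance]
  refine sum_mul_exp_mul_sq_le _ _ _ (by positivity) (by linarith) fun y => ?_
  calc ∑ d ∈ range (n + 1), (n.choose d : ℝ) * (1 / 2) ^ n * exp (y * (d - n / 2))
      = cosh (y / 2) ^ n := sum_choose_mul_exp_eq_cosh_pow n y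
    _ ≤ exp ((y / 2) ^ 2 / 2) ^ n := by
        gcongr
        exact cosh_le_exp_half_sq _
    _ = exp (n / 4 * y ^ 2 / 2) := by
        rw [← exp_nat_mul]
        ring_nf

theorem sum_choose_mul_exp_neg_le_one (n : ℕ) {A E : ℝ} (h : exp (-A) ≤ E) :
    ∑ d ∈ range (n + 1), (n.choose d : ℝ) * exp (-(E * n) - A * d) ≤ 1 := by
  calc ∑ d ∈ range (n + 1), (n.choose d : ℝ) * exp (-(E * n) - A * d)
      = exp (-(E * n)) * (exp (-A) + 1) ^ n := by
        rw [add_pow, mul_sum]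
        refine sum_congr rfl fun d _ => ?_
        rw [sub_eq_add_neg, exp_add, ← exp_nat_mul, one_pow]
        ring_nf
    _ ≤ exp (-(E * n)) * exp E ^ n := by
        gcongr
        exact (add_one_le_exp _).trans (exp_le_exp.2 h)
    _ = 1 := by
        rw [← exp_nat_mul, ← exp_add]
        simp [mul_comm]

theorem sum_choose_mul_reflect (n : ℕ) (f : ℝ → ℝ) :
    ∑ d ∈ range (n + 1), (n.choose d : ℝ) * f (n - d) =
      ∑ d ∈ range (n + 1), (n.choose d : ℝ) * f d := by
  rw [← sum_flip fun d => (n.choose d : ℝ) * f d]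
  refine sum_congr rfl fun d hd => ?_
  have hd := mem_range_succ_iff.1 hd
  rw [Nat.choose_symm hd, Nat.cast_sub hd]

end ExponentialSums

section CorrelationRatio

open Real

theorem violProb_pos (k : ℕ) : 0 < violProb k := by
  unfold violProb
  positivity

theorem abs_add_pow_add_sub_pow_sub_le (k : ℕ) {m d M : ℝ} (hadd : |m + d| ≤ M)
    (hsub : |m - d| ≤ M) :
    |(m + d) ^ (k + 2) + (m - d) ^ (k + 2) - 2 * m ^ (k + 2)| ≤
      (k + 2) * (k + 1) * M ^ k * d ^ 2 := by
  have hM : 0 ≤ M := (abs_nonneg _).trans hadd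
  have hm : |m| ≤ M := by
    rw [abs_le] at *
    constructor <;> linarith
  induction k with
  | zero =>
    rw [show (m + d) ^ (0 + 2) + (m - d) ^ (0 + 2) - 2 * m ^ (0 + 2) = 2 * d ^ 2 by ring,
      abs_of_nonneg (by positivity)]
    simp
  | succ k ih =>
    have first_diff : |(m + d) ^ (k + 2) - (m - d) ^ (k + 2)| ≤ 2 * |d| * (k + 2) * M ^ (k + 1) :=
      calc |(m + d) ^ (k + 2) - (m - d) ^ (k + 2)|
          ≤ |(m + d) - (m - d)| * (k + 2 : ℕ) * max |m + d| |m - d| ^ (k + 1) :=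
            abs_pow_sub_pow_le _ _ _
        _ ≤ 2 * |d| * (k + 2) * M ^ (k + 1) := by
            rw [show m + d - (m - d) = 2 * d by ring, abs_mul, abs_two]
            push_cast
            gcongr
            exact max_le hadd hsub
    calc |(m + d) ^ (k + 1 + 2) + (m - d) ^ (k + 1 + 2) - 2 * m ^ (k + 1 + 2)|
        = |m * ((m + d) ^ (k + 2) + (m - d) ^ (k + 2) - 2 * m ^ (k + 2)) +
            d * ((m + d) ^ (k + 2) - (m - d) ^ (k + 2))| := by ring_nf
      _ ≤ M * ((k + 2) * (k + 1) * M ^ k * d ^ 2) + |d| * (2 * |d| * (k + 2) * M ^ (k + 1)) := by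
          grw [abs_add_le, abs_mul, abs_mul, hm, ih, first_diff]
      _ = M ^ (k + 1) * (k + 2) * ((k + 1) * d ^ 2 + 2 * |d| ^ 2) := by ring
      _ = ((k + 1 : ℕ) + 2) * ((k + 1 : ℕ) + 1) * M ^ (k + 1) * d ^ 2 := by
          rw [sq_abs]
          push_cast
          ring

theorem monoProb_one_sub (k : ℕ) (x : ℝ) : monoProb k (1 - x) = monoProb k x := by
  rw [monoProb, monoProb, sub_sub_cancel, add_comm]

theorem correlationRatio_one_sub (k : ℕ) (x : ℝ) :
    correlationRatio k (1 - x) = correlationRatio k x := by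
  rw [correlationRatio, correlationRatio, jointProb, jointProb, monoProb_one_sub]

variable {k : ℕ} {x : ℝ}

theorem violProb_le_monoProb (hk : k ≠ 0) (hx₀ : 0 ≤ x) (hx₁ : x ≤ 1) :
    violProb k ≤ monoProb k x := by
  obtain ⟨k, rfl⟩ := Nat.exists_eq_succ_of_ne_zero hk
  have power_mean := add_pow_le (sub_nonneg.2 hx₁) hx₀ (k + 1)
  rw [sub_add_cancel, one_pow, Nat.add_sub_cancel] at power_mean
  calc violProb (k + 1) = (1 / 2) ^ k * 1 := by
        rw [violProb]
        ring
    _ ≤ (1 / 2) ^ k * (2 ^ k * monoProb (k + 1) x) := by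
        gcongr
        exact power_mean
    _ = monoProb (k + 1) x := by
        rw [← mul_assoc, ← mul_pow]
        norm_num

theorem monoProb_le_one (hk : k ≠ 0) (hx₀ : 0 ≤ x) (hx₁ : x ≤ 1) : monoProb k x ≤ 1 := by
  have := pow_le_of_le_one hx₀ hx₁ hk
  have := pow_le_of_le_one (sub_nonneg.2 hx₁) (sub_le_self 1 hx₀) hk
  unfold monoProb
  linarith

theorem correlationRatio_sub_one (hk : 2 ≤ k) (x : ℝ) :
    correlationRatio k x - 1 =
      violProb k * (monoProb k x - violProb k) / (1 - violProb k) ^ 2 := by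
  have hw : 1 - violProb k ≠ 0 := (sub_pos.2 (violProb_lt_one hk)).ne'
  rw [correlationRatio, jointProb]
  field_simp
  ring

theorem one_le_correlationRatio (hk : 2 ≤ k) (hx₀ : 0 ≤ x) (hx₁ : x ≤ 1) :
    1 ≤ correlationRatio k x := by
  have := violProb_le_monoProb (by lia : k ≠ 0) hx₀ hx₁
  rw [← sub_nonneg, correlationRatio_sub_one hk]
  exact div_nonneg (mul_nonneg (violProb_pos k).le (sub_nonneg.2 this)) (sq_nonneg _)

theorem log_correlationRatio_le (hk : 2 ≤ k) (hx₀ : 0 ≤ x) (hx₁ : x ≤ 1) :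
    log (correlationRatio k x) ≤ -log (1 - violProb k) - violProb k * (1 - monoProb k x) := by
  have hQ := one_le_correlationRatio hk hx₀ hx₁
  have hw : 0 < 1 - violProb k := sub_pos.2 (violProb_lt_one hk)
  have loss_nonneg : 0 ≤ violProb k * (1 - monoProb k x) :=
    mul_nonneg (violProb_pos k).le (sub_nonneg.2 (monoProb_le_one (by lia) hx₀ hx₁))
  have factor : (1 - violProb k) * correlationRatio k x =
      1 - violProb k * (1 - monoProb k x) / (1 - violProb k) := by
    rw [correlationRatio, jointProb]
    field_simp
    ring
  have loss_le : violProb k * (1 - monoProb k x) ≤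
      violProb k * (1 - monoProb k x) / (1 - violProb k) :=
    le_div_self loss_nonneg hw (sub_le_self 1 (violProb_pos k).le)
  have log_le := log_le_sub_one_of_pos (mul_pos hw (zero_lt_one.trans_le hQ))
  rw [log_mul hw.ne' (zero_lt_one.trans_le hQ).ne', factor] at log_le
  linarith

theorem one_sub_pow_le_exp (k : ℕ) (hx₁ : x ≤ 1) : (1 - x) ^ k ≤ exp (-(k * x)) := by
  calc (1 - x) ^ k ≤ exp (-x) ^ k :=
        pow_le_pow_left₀ (sub_nonneg.2 hx₁) (one_sub_le_exp_neg x) k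
    _ = exp (-(k * x)) := by rw [← exp_nat_mul, mul_neg]

theorem le_one_sub_monoProb (hk : 2 ≤ k) (hx₀ : 0 ≤ x) (hkx : k * x ≤ 1) :
    k * x - (k ^ 2 + 1) * x ^ 2 ≤ 1 - monoProb k x := by
  have hk' : (1 : ℝ) ≤ k := by exact_mod_cast (by lia : 1 ≤ k)
  have hx₁ : x ≤ 1 := (le_mul_of_one_le_left hx₀ hk').trans hkx
  have hkx₀ : 0 ≤ k * x := by positivity
  have exp_le := (abs_le.1 (abs_exp_sub_one_sub_id_le (x := -(k * x))
    (by rwa [abs_neg, abs_of_nonneg hkx₀]))).2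
  have := one_sub_pow_le_exp k hx₁
  have : x ^ k ≤ x ^ 2 := pow_le_pow_of_le_one hx₀ hx₁ hk
  unfold monoProb
  linarith

theorem tendsto_natCast_pow_mul_violProb (j : ℕ) :
    Tendsto (fun k : ℕ => (k : ℝ) ^ j * violProb k) atTop (𝓝 0) := by
  have := (tendsto_pow_const_mul_const_pow_of_abs_lt_one j
    (show |(1 / 2 : ℝ)| < 1 by norm_num [abs_of_pos])).const_mul 2
  simpa only [violProb, mul_left_comm, mul_zero] using this

theorem tendsto_violProb : Tendsto violProb atTop (𝓝 0) := by
  simpa only [pow_zero, one_mul] using tendsto_natCast_pow_mul_violProb 0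

theorem monoProb_sub_violProb_le_of_lt (hk : k ≠ 0) (hkx : 1 / 2 ≤ k * x) (hx₀ : 0 ≤ x)
    (hx : x < 1 / 100) : monoProb k x - violProb k ≤ 27 / 10 * (x - 1 / 2) ^ 2 := by
  have exp_half : exp (-(1 / 2)) ≤ 61 / 100 := by
    refine le_of_sq_le_sq (?_ : _ ^ 2 ≤ _ ^ 2) (by norm_num)
    calc exp (-(1 / 2)) ^ 2 = exp (-1) := by
          rw [← exp_nat_mul]
          norm_num
      _ ≤ (61 / 100) ^ 2 := exp_neg_one_lt_d9.le.trans (by norm_num)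
  have : (1 - x) ^ k ≤ exp (-(1 / 2)) :=
    (one_sub_pow_le_exp k (by linarith)).trans (exp_le_exp.2 (neg_le_neg hkx))
  have : x ^ k ≤ x := pow_le_of_le_one hx₀ (by linarith) hk
  have := violProb_pos k
  unfold monoProb
  nlinarith

theorem eventually_monoProb_sub_violProb_le :
    ∀ᶠ k : ℕ in atTop, ∀ x : ℝ, 1 / 2 ≤ k * x → 0 ≤ x → x ≤ 1 / 2 →
      monoProb k x - violProb k ≤ 27 / 10 * (x - 1 / 2) ^ 2 := by
  have second_diff_small : ∀ᶠ k : ℕ in atTop,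
      ((k : ℝ) + 2) * (k + 1) * (99 / 100) ^ k ≤ 27 / 10 := by
    have limit (j : ℕ) : Tendsto (fun k : ℕ => (k : ℝ) ^ j * (99 / 100) ^ k) atTop (𝓝 0) :=
      tendsto_pow_const_mul_const_pow_of_abs_lt_one j (by norm_num [abs_of_pos])
    have sum_limit := ((limit 2).add ((limit 1).const_mul 3)).add ((limit 0).const_mul 2)
    simp only [mul_zero, add_zero] at sum_limit
    have product_limit : Tendsto (fun k : ℕ => ((k : ℝ) + 2) * (k + 1) * (99 / 100) ^ k)
        atTop (𝓝 0) := sum_limit.congr fun k => by ring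
    exact product_limit.eventually_le_const (by norm_num)
  filter_upwards [(tendsto_sub_atTop_nat 2).eventually second_diff_small, eventually_ge_atTop 2]
    with k small hk x hkx hx₀ hx
  rcases lt_or_ge x (1 / 100) with hlt | hge
  · exact monoProb_sub_violProb_le_of_lt (by lia) hkx hx₀ hlt
  obtain ⟨k, rfl⟩ := Nat.exists_eq_add_of_le' hk
  rw [Nat.add_sub_cancel] at small
  have second_diff := abs_add_pow_add_sub_pow_sub_le k (m := 1 / 2) (d := 1 / 2 - x)
    (M := 99 / 100) (abs_le.2 ⟨by linarith, by linarith⟩) (abs_le.2 ⟨by linarith, by linarith⟩)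
  calc monoProb (k + 2) x - violProb (k + 2)
      = (1 / 2 + (1 / 2 - x)) ^ (k + 2) + (1 / 2 - (1 / 2 - x)) ^ (k + 2)
          - 2 * (1 / 2) ^ (k + 2) := by
        rw [monoProb, violProb]
        ring_nf
    _ ≤ (k + 2) * (k + 1) * (99 / 100) ^ k * (1 / 2 - x) ^ 2 := (le_abs_self _).trans second_diff
    _ ≤ 27 / 10 * (1 / 2 - x) ^ 2 := by gcongr
    _ = 27 / 10 * (x - 1 / 2) ^ 2 := by ring

end CorrelationRatio

section Density

open Real

/-- The supremum of the clause densities under consideration, `ε` below the threshold given by the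
second moment method. -/
noncomputable def density (ε : ℝ) (k : ℕ) : ℝ :=
  2 ^ ((k : ℤ) - 1) * log 2 - (1 + log 2) / 2 - ε

/-- The exponential growth rate of the expected number of satisfying assignments at density
`density ε k`. -/
noncomputable def firstMomentRate (ε : ℝ) (k : ℕ) : ℝ :=
  log 2 + density ε k * log (1 - violProb k)

/-- A lower bound for the slope at which the exponent of the second moment decreases when two
nearly equal assignments move apart. -/
noncomputable def edgeRate (ε : ℝ) (k : ℕ) : ℝ :=
  density ε k * violProb k * (k - 2 / k)

theorem density_mul_violProb (ε : ℝ) (k : ℕ) :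
    density ε k * violProb k = log 2 - violProb k * ((1 + log 2) / 2 + ε) := by
  have cancel : (2 : ℝ) ^ ((k : ℤ) - 1) * violProb k = 1 := by
    rw [violProb, zpow_sub_one₀ two_ne_zero, zpow_natCast, one_div, inv_pow]
    field_simp
  calc density ε k * violProb k
      = 2 ^ ((k : ℤ) - 1) * violProb k * log 2 - violProb k * ((1 + log 2) / 2 + ε) := by
        rw [density]
        ring
    _ = _ := by rw [cancel, one_mul]

theorem tendsto_density_mul_violProb (ε : ℝ) :
    Tendsto (fun k => density ε k * violProb k) atTop (𝓝 (log 2)) := by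
  simp only [density_mul_violProb]
  simpa only [zero_mul, sub_zero] using
    (tendsto_violProb.mul_const ((1 + log 2) / 2 + ε)).const_sub (log 2)

theorem eventually_le_density_mul_violProb (ε : ℝ) :
    ∀ᶠ k in atTop, 3 / 5 ≤ density ε k * violProb k :=
  (tendsto_density_mul_violProb ε).eventually_const_le (by linarith [log_two_gt_d9])

theorem eventually_density_nonneg (ε : ℝ) : ∀ᶠ k in atTop, 0 ≤ density ε k := by
  filter_upwards [eventually_le_density_mul_violProb ε] with k hk
  exact nonneg_of_mul_nonneg_left (by linarith) (violProb_pos k)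

theorem neg_log_one_sub_le {w : ℝ} (hw₀ : 0 ≤ w) (hw : w ≤ 1 / 2) :
    -log (1 - w) ≤ w + w ^ 2 / 2 + 2 * w ^ 3 := by
  have taylor := (abs_le.1 (abs_log_sub_add_sum_range_le (x := w)
    (abs_lt.2 ⟨by linarith, by linarith⟩) 2)).1
  have remainder : w ^ 3 / (1 - w) ≤ 2 * w ^ 3 := by
    rw [div_le_iff₀ (by linarith)]
    nlinarith [pow_nonneg hw₀ 3]
  simp only [sum_range_succ, sum_range_zero, abs_of_nonneg hw₀, Nat.cast_zero,
    Nat.cast_one, zero_add, one_add_one_eq_two, Nat.reduceAdd, pow_one, div_one] at taylor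
  linarith

variable {ε : ℝ}

theorem eventually_le_firstMomentRate (hε : 0 < ε) :
    ∀ᶠ k in atTop, violProb k / 2 * (1 + ε) ≤ firstMomentRate ε k := by
  filter_upwards [eventually_density_nonneg ε,
    tendsto_violProb.eventually_le_const one_half_pos,
    tendsto_violProb.eventually_le_const (show 0 < ε / 4 by positivity)] with k hρ hw hwε
  have hw₀ := violProb_pos k
  have hlog := log_two_lt_d9
  have density_mul := density_mul_violProb ε k
  set w := violProb k
  have density_mul_le : density ε k * w ≤ log 2 := by
    rw [density_mul]
    exact sub_le_self _ (by positivity)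
  calc w / 2 * (1 + ε)
      ≤ w * ((1 + log 2) / 2 + ε) - log 2 * (w / 2 + 2 * w ^ 2) := by
        nlinarith [mul_nonneg hw₀.le (sub_nonneg.2 hwε), mul_pos hw₀ hw₀]
    _ = log 2 - density ε k * w - log 2 * (w / 2 + 2 * w ^ 2) := by
        rw [density_mul]
        ring
    _ ≤ log 2 - density ε k * w - density ε k * w * (w / 2 + 2 * w ^ 2) := by gcongr
    _ = log 2 - density ε k * (w + w ^ 2 / 2 + 2 * w ^ 3) := by ring
    _ ≤ log 2 - density ε k * -log (1 - w) := by
        gcongr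
        exact neg_log_one_sub_le hw₀.le hw
    _ = firstMomentRate ε k := by
        rw [firstMomentRate]
        ring

theorem eventually_exp_neg_edgeRate_le (hε : 0 < ε) :
    ∀ᶠ k in atTop, exp (-edgeRate ε k) ≤ violProb k / 2 * (1 + ε) := by
  have gap_tendsto : Tendsto (fun k : ℕ => (k : ℝ) * violProb k * ((1 + log 2) / 2 + ε) +
      density ε k * violProb k * (2 / k)) atTop (𝓝 0) := by
    simpa only [pow_one, zero_mul, mul_zero, add_zero] using
      ((tendsto_natCast_pow_mul_violProb 1).mul_const ((1 + log 2) / 2 + ε)).add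
        ((tendsto_density_mul_violProb ε).mul (tendsto_const_div_atTop_nhds_zero_nat 2))
  have gap_eventually := gap_tendsto.eventually_le_const (log_pos (show 1 < 1 + ε by linarith))
  filter_upwards [gap_eventually] with k gap
  have half_violProb : violProb k / 2 = exp (-(k * log 2)) := by
    rw [violProb, ← mul_neg, exp_nat_mul, exp_neg, exp_log two_pos]
    ring
  rw [half_violProb, ← log_le_log_iff (exp_pos _) (by positivity),
    log_mul (exp_pos _).ne' (by positivity), log_exp, log_exp, edgeRate]
  linear_combination gap - k * density_mul_violProb ε k

theorem density_mul_log_correlationRatio_le {k : ℕ} {x : ℝ} (hρ : 0 ≤ density ε k) (hk : 2 ≤ k)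
    (hx₀ : 0 ≤ x) (hx₁ : x ≤ 1) :
    density ε k * log (correlationRatio k x) ≤
      log 2 - firstMomentRate ε k - density ε k * violProb k * (1 - monoProb k x) := by
  rw [firstMomentRate]
  linear_combination density ε k * log_correlationRatio_le hk hx₀ hx₁

theorem eventually_density_mul_log_correlationRatio_le_edgeRate (ε : ℝ) :
    ∀ᶠ k : ℕ in atTop, ∀ x : ℝ, 0 ≤ x → x ≤ 1 / k ^ 3 →
      density ε k * log (correlationRatio k x) ≤
        log 2 - firstMomentRate ε k - edgeRate ε k * x := by
  filter_upwards [eventually_density_nonneg ε, eventually_ge_atTop 2] with k hρ hk x hx₀ hx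
  have hk' : (2 : ℝ) ≤ k := by exact_mod_cast hk
  have quadratic_le : (k ^ 2 + 1) * x ^ 2 ≤ 2 / k * x := by
    calc (k ^ 2 + 1) * x ^ 2 ≤ (k ^ 2 + k ^ 2) * (x * (1 / k ^ 3)) := by
          rw [sq x]
          gcongr
          nlinarith
      _ = 2 / k * x := by
          field_simp
          ring
  have hkx : k * x ≤ 1 := by
    calc k * x ≤ k * (1 / k ^ 3) := by gcongr
      _ = 1 / k ^ 2 := by field_simp
      _ ≤ 1 := div_le_one_of_le₀ (by nlinarith) (by positivity)
  have hx₁ : x ≤ 1 := by nlinarith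
  have slope : (k - 2 / k) * x ≤ 1 - monoProb k x := by
    linarith [le_one_sub_monoProb hk hx₀ hkx]
  calc density ε k * log (correlationRatio k x)
      ≤ log 2 - firstMomentRate ε k - density ε k * violProb k * (1 - monoProb k x) :=
        density_mul_log_correlationRatio_le hρ hk hx₀ hx₁
    _ ≤ log 2 - firstMomentRate ε k - density ε k * violProb k * ((k - 2 / k) * x) := by
        have := (violProb_pos k).le
        gcongr
    _ = log 2 - firstMomentRate ε k - edgeRate ε k * x := by
        rw [edgeRate]
        ring

theorem eventually_density_mul_log_correlationRatio_le_linear (hε : 0 < ε) :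
    ∀ᶠ k : ℕ in atTop, ∀ x : ℝ, 1 / k ^ 3 ≤ x → k * x ≤ 1 / 2 →
      density ε k * log (correlationRatio k x) ≤ log 2 - 1 / (10 * k ^ 2) - k / 10 * x := by
  filter_upwards [eventually_density_nonneg ε, eventually_le_density_mul_violProb ε,
    eventually_le_firstMomentRate hε, eventually_ge_atTop 3] with k hρ hρw hE hk x hx hkx
  have hk' : (3 : ℝ) ≤ k := by exact_mod_cast hk
  have hx₀ : 0 ≤ x := le_trans (by positivity) hx
  have hx₁ : x ≤ 1 := by nlinarith
  have hE₀ : 0 ≤ firstMomentRate ε k := by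
    have := violProb_pos k
    exact le_trans (by positivity) hE
  have linear_le : 2 / 5 * (k * x) ≤ 1 - monoProb k x := by
    have := le_one_sub_monoProb (by lia) hx₀ (hkx.trans (by norm_num))
    nlinarith [mul_nonneg (mul_nonneg hx₀ (by positivity : (0 : ℝ) ≤ k)) (sub_nonneg.2 hkx)]
  have inv_sq_le : 1 / k ^ 2 ≤ k * x := by
    calc 1 / (k : ℝ) ^ 2 = k * (1 / k ^ 3) := by field_simp
      _ ≤ k * x := by gcongr
  calc density ε k * log (correlationRatio k x)
      ≤ log 2 - firstMomentRate ε k - density ε k * violProb k * (1 - monoProb k x) :=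
        density_mul_log_correlationRatio_le hρ (by lia) hx₀ hx₁
    _ ≤ log 2 - 0 - 3 / 5 * (2 / 5 * (k * x)) := by gcongr
    _ ≤ log 2 - 1 / 10 * (1 / k ^ 2) - k / 10 * x := by
        have : 0 ≤ k * x := by positivity
        linarith
    _ = _ := by ring

theorem eventually_density_mul_log_correlationRatio_le_quadratic (ε : ℝ) :
    ∀ᶠ k : ℕ in atTop, ∀ x : ℝ, 1 / 2 ≤ k * x → 0 ≤ x → x ≤ 1 / 2 →
      density ε k * log (correlationRatio k x) ≤ 15 / 8 * (x - 1 / 2) ^ 2 := by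
  have coefficient_tendsto : Tendsto
      (fun k => density ε k * violProb k / (1 - violProb k) ^ 2) atTop (𝓝 (log 2)) := by
    simpa [Pi.div_def] using
      (tendsto_density_mul_violProb ε).div ((tendsto_violProb.const_sub 1).pow 2) (by norm_num)
  have coefficient_eventually := coefficient_tendsto.eventually_le_const
    (show log 2 < 25 / 36 by linarith [log_two_lt_d9])
  filter_upwards [coefficient_eventually, eventually_monoProb_sub_violProb_le,
    eventually_density_nonneg ε, eventually_ge_atTop 2] with k coefficient hmono hρ hk x hkx hx₀ hx
  have hQ := one_le_correlationRatio hk hx₀ (by linarith)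
  have hexcess := sub_nonneg.2 (violProb_le_monoProb (by lia : k ≠ 0) hx₀ (by linarith))
  calc density ε k * log (correlationRatio k x)
      ≤ density ε k * (correlationRatio k x - 1) := by
        gcongr
        exact log_le_sub_one_of_pos (by linarith)
    _ = density ε k * violProb k / (1 - violProb k) ^ 2 * (monoProb k x - violProb k) := by
        rw [correlationRatio_sub_one hk]
        ring
    _ ≤ 25 / 36 * (27 / 10 * (x - 1 / 2) ^ 2) := by
        gcongr
        exact hmono x hkx hx₀ hx
    _ = 15 / 8 * (x - 1 / 2) ^ 2 := by ring

end Density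

section SecondMoment

open Real

/-- A bound for the contribution to the second moment of a pair of assignments at Hamming
distance `y`, relative to `2 ^ n`, when `y` is so small that the Gaussian bound fails. The first
summand is for `y / n ≤ 1 / k ^ 3`, the second for `1 / k ^ 3 ≤ y / n ≤ 1 / (2 * k)`. -/
noncomputable def edgeWeight (ε : ℝ) (k n : ℕ) (y : ℝ) : ℝ :=
  exp (-(firstMomentRate ε k * n) - edgeRate ε k * y) +
    exp (-(1 / (10 * k ^ 2) * n) - k / 10 * y)

theorem edgeWeight_nonneg (ε : ℝ) (k n : ℕ) (y : ℝ) : 0 ≤ edgeWeight ε k n y := by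
  unfold edgeWeight
  positivity

theorem eventually_exp_neg_div_ten_le :
    ∀ᶠ k : ℕ in atTop, exp (-(k / 10 : ℝ)) ≤ 1 / (10 * k ^ 2) := by
  have limit : Tendsto (fun k : ℕ => (k : ℝ) ^ 2 * exp (-(1 / 10)) ^ k) atTop (𝓝 0) :=
    tendsto_pow_const_mul_const_pow_of_abs_lt_one 2 (by
      rw [abs_of_pos (exp_pos _), exp_lt_one_iff]
      norm_num)
  filter_upwards [limit.eventually_le_const (show (0 : ℝ) < 1 / 10 by norm_num),
    eventually_gt_atTop 0] with k hk hk₀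
  rw [← exp_nat_mul] at hk
  rw [le_div_iff₀ (by positivity), show -(k / 10 : ℝ) = k * -(1 / 10) by ring]
  linarith

theorem eventually_sum_choose_mul_edgeWeight_le {ε : ℝ} (hε : 0 < ε) :
    ∀ᶠ k in atTop, ∀ n : ℕ,
      ∑ d ∈ range (n + 1), (n.choose d : ℝ) * edgeWeight ε k n d ≤ 2 := by
  filter_upwards [eventually_exp_neg_edgeRate_le hε, eventually_le_firstMomentRate hε,
    eventually_exp_neg_div_ten_le] with k hA hE hfar n
  have near := sum_choose_mul_exp_neg_le_one n (hA.trans hE)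
  have far := sum_choose_mul_exp_neg_le_one n hfar
  simp only [edgeWeight, mul_add, sum_add_distrib]
  linarith

theorem exp_mul_log_two_sub {n : ℕ} (hn : n ≠ 0) (c A y : ℝ) :
    exp (n * (log 2 - c - A * (y / n))) = 2 ^ n * exp (-(c * n) - A * y) := by
  calc exp (n * (log 2 - c - A * (y / n))) = exp (n * log 2 + (-(c * n) - A * y)) := by
        congr 1
        field_simp
        ring
    _ = 2 ^ n * exp (-(c * n) - A * y) := by rw [exp_add, exp_nat_mul, exp_log two_pos]

theorem eventually_exp_density_mul_log_correlationRatio_le {ε : ℝ} (hε : 0 < ε) :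
    ∀ᶠ k in atTop, ∀ n : ℕ, n ≠ 0 → ∀ y : ℝ, 0 ≤ y → y ≤ n / 2 →
      exp (n * (density ε k * log (correlationRatio k (y / n)))) ≤
        exp (15 / 8 / n * (y - n / 2) ^ 2) + 2 ^ n * edgeWeight ε k n y := by
  filter_upwards [eventually_density_mul_log_correlationRatio_le_edgeRate ε,
    eventually_density_mul_log_correlationRatio_le_linear hε,
    eventually_density_mul_log_correlationRatio_le_quadratic ε]
    with k near far middle n hn y hy₀ hy
  have hn' : (0 : ℝ) < n := by positivity
  have hx₀ : 0 ≤ y / n := by positivity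
  have exp_le {a : ℝ} (h : density ε k * log (correlationRatio k (y / n)) ≤ a) :
      exp (n * (density ε k * log (correlationRatio k (y / n)))) ≤ exp (n * a) :=
    exp_le_exp.2 (mul_le_mul_of_nonneg_left h hn'.le)
  have gaussian_nonneg : 0 ≤ exp (15 / 8 / n * (y - n / 2) ^ 2) := (exp_pos _).le
  have near_nonneg : 0 ≤ 2 ^ n * exp (-(firstMomentRate ε k * n) - edgeRate ε k * y) := by
    positivity
  have far_nonneg : 0 ≤ 2 ^ n * exp (-(1 / (10 * k ^ 2) * n) - k / 10 * y) := by positivity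
  rw [edgeWeight, mul_add]
  rcases le_total (y / n) (1 / (k : ℝ) ^ 3) with hx | hx
  · have := exp_le (near _ hx₀ hx)
    rw [exp_mul_log_two_sub hn] at this
    linarith
  rcases le_total (k * (y / n)) (1 / 2) with hkx | hkx
  · have := exp_le (far _ hx hkx)
    rw [exp_mul_log_two_sub hn] at this
    linarith
  · have hx_half : y / n ≤ 1 / 2 := by
      rw [div_le_iff₀ hn']
      linarith
    have := exp_le (middle _ hkx hx₀ hx_half)
    rw [show n * (15 / 8 * (y / n - 1 / 2) ^ 2) = 15 / 8 / n * (y - n / 2) ^ 2 by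
      field_simp] at this
    linarith

theorem eventually_correlationRatio_pow_le {ε : ℝ} (hε : 0 < ε) :
    ∀ᶠ k in atTop, ∀ n m d : ℕ, n ≠ 0 → m ≤ density ε k * n → d ≤ n →
      correlationRatio k (d / n) ^ m ≤ exp (15 / 8 / n * (d - n / 2) ^ 2) +
        2 ^ n * (edgeWeight ε k n d + edgeWeight ε k n (n - d)) := by
  filter_upwards [eventually_exp_density_mul_log_correlationRatio_le hε, eventually_ge_atTop 2]
    with k exp_le hk n m d hn hm hd
  have hn' : (0 : ℝ) < n := by positivity
  have hd' : (d : ℝ) ≤ n := by exact_mod_cast hd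
  have hQ := one_le_correlationRatio hk (by positivity) (div_le_one_of_le₀ hd' hn'.le)
  have pow_le : correlationRatio k (d / n) ^ m ≤
      exp (n * (density ε k * log (correlationRatio k (d / n)))) := by
    calc correlationRatio k (d / n) ^ m = exp (m * log (correlationRatio k (d / n))) := by
          rw [exp_nat_mul, exp_log (by linarith)]
      _ ≤ exp (density ε k * n * log (correlationRatio k (d / n))) := by
          have := log_nonneg hQ
          gcongr
      _ = _ := by ring_nf
  rcases le_total (d : ℝ) (n / 2) with hle | hge
  · have := exp_le n hn d (by positivity) hle
    have : 0 ≤ 2 ^ n * edgeWeight ε k n (n - d) :=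
      mul_nonneg (by positivity) (edgeWeight_nonneg ..)
    linarith
  · have := exp_le n hn (n - d) (by linarith) (by linarith)
    rw [sub_div, div_self hn'.ne', correlationRatio_one_sub,
      show ((n : ℝ) - d - n / 2) ^ 2 = (d - n / 2) ^ 2 by ring] at this
    have : 0 ≤ 2 ^ n * edgeWeight ε k n d :=
      mul_nonneg (by positivity) (edgeWeight_nonneg ..)
    linarith

theorem eventually_sum_choose_mul_correlationRatio_pow_le {ε : ℝ} (hε : 0 < ε) :
    ∀ᶠ k in atTop, ∀ n m : ℕ, n ≠ 0 → m ≤ density ε k * n →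
      ∑ d ∈ range (n + 1), (n.choose d : ℝ) * (1 / 2) ^ n * correlationRatio k (d / n) ^ m ≤ 8 := by
  filter_upwards [eventually_correlationRatio_pow_le hε, eventually_sum_choose_mul_edgeWeight_le hε]
    with k pow_le edge_le n m hn hm
  calc ∑ d ∈ range (n + 1), (n.choose d : ℝ) * (1 / 2) ^ n * correlationRatio k (d / n) ^ m
      ≤ ∑ d ∈ range (n + 1), (n.choose d : ℝ) * (1 / 2) ^ n *
          (exp (15 / 8 / n * (d - n / 2) ^ 2) +
            2 ^ n * (edgeWeight ε k n d + edgeWeight ε k n (n - d))) := by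
        gcongr with d hd
        exact pow_le n m d hn hm (mem_range_succ_iff.1 hd)
    _ = (∑ d ∈ range (n + 1), (n.choose d : ℝ) * (1 / 2) ^ n *
          exp (15 / 8 / n * (d - n / 2) ^ 2)) +
        ∑ d ∈ range (n + 1), (n.choose d : ℝ) * edgeWeight ε k n d +
        ∑ d ∈ range (n + 1), (n.choose d : ℝ) * edgeWeight ε k n (n - d) := by
        rw [← sum_add_distrib, ← sum_add_distrib]
        refine sum_congr rfl fun d _ => ?_
        rw [one_div, inv_pow]
        field_simp
        ring
    _ ≤ (√(1 - 15 / 8 / 2))⁻¹ + 2 + 2 := by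
        rw [sum_choose_mul_reflect]
        gcongr
        · exact sum_choose_mul_exp_sq_le hn (by norm_num) (by norm_num)
        · exact edge_le n
        · exact edge_le n
    _ = 8 := by
        rw [show (1 - 15 / 8 / 2 : ℝ) = (1 / 4) ^ 2 by norm_num, sqrt_sq (by norm_num)]
        norm_num

/-- The fraction of the sequences of `m` ordered `k`-clauses on `n` variables that are
NAE-satisfiable. -/
noncomputable def satFraction (n k m : ℕ) : ℝ :=
  Nat.card {F : Fin m → Fin k → Fin n × Bool // Satisfiable F} / (2 * n) ^ (k * m)

theorem satFraction_le_one (n k m : ℕ) : satFraction n k m ≤ 1 := by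
  refine div_le_one_of_le₀ ?_ (by positivity)
  have := Finite.card_subtype_le fun F : Fin m → Fin k → Fin n × Bool => Satisfiable F
  simp only [Nat.card_fun, Nat.card_prod, Nat.card_fin, Nat.card_eq_fintype_card (α := Bool),
    Fintype.card_bool, ← pow_mul, mul_comm n 2] at this
  exact_mod_cast this

theorem eventually_le_satFraction {ε : ℝ} (hε : 0 < ε) :
    ∀ᶠ k in atTop, ∀ n m : ℕ, n ≠ 0 → m ≤ density ε k * n → 1 / 8 ≤ satFraction n k m := by
  filter_upwards [eventually_sum_choose_mul_correlationRatio_pow_le hε, eventually_ge_atTop 2]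
    with k sum_le hk n m hn hm
  have : NeZero n := ⟨hn⟩
  have second_moment := pow_le_natCard_satisfiable_mul (Fin n) (Fin k) (Fin m)
    (by rwa [Fintype.card_fin])
  simp only [Fintype.card_fin] at second_moment
  rw [satFraction, le_div_iff₀ (by positivity)]
  have := second_moment.trans (mul_le_mul_of_nonneg_left (sum_le n m hn hm) (Nat.cast_nonneg _))
  linarith

end SecondMoment

end NAESat

/-- For every `ε > 0` there is `k₀` such that for all `k ≥ k₀` and
`0 < r < 2^(k-1) ln 2 - (1 + ln 2)/2 - ε`, the fraction of sequences of `⌊rn⌋` ordered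
`k`-clauses on `n` variables that are NAE-satisfiable has strictly positive lim inf
as `n → ∞`. -/
theorem nae_sat_wupp (ε : ℝ) (hε : 0 < ε) :
    ∃ k₀ : ℕ, ∀ k : ℕ, k₀ ≤ k → ∀ r : ℝ, 0 < r →
      r < (2 : ℝ) ^ ((k : ℤ) - 1) * Real.log 2 - (1 + Real.log 2) / 2 - ε →
      0 < Filter.liminf
        (fun n : ℕ =>
          (Nat.card {F : Fin ⌊r * (n : ℝ)⌋₊ → Fin k → Fin n × Bool //
              ∃ σ : Fin n → Bool, ∀ i,
                (∃ j, σ (F i j).1 = (F i j).2) ∧ (∃ j, σ (F i j).1 ≠ (F i j).2)} : ℝ) /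
            (2 * (n : ℝ)) ^ (k * ⌊r * (n : ℝ)⌋₊))
        Filter.atTop := by
  obtain ⟨k₀, hk₀⟩ := Filter.eventually_atTop.1 (NAESat.eventually_le_satFraction hε)
  refine ⟨k₀, fun k hk r hr hrk => ?_⟩
  change 0 < Filter.liminf (fun n : ℕ => NAESat.satFraction n k ⌊r * n⌋₊) Filter.atTop
  have bounded : ∀ᶠ n : ℕ in Filter.atTop, 1 / 8 ≤ NAESat.satFraction n k ⌊r * n⌋₊ := by
    filter_upwards [Filter.eventually_ne_atTop 0] with n hn
    refine hk₀ k hk n _ hn ((Nat.floor_le (by positivity)).trans ?_)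
    exact mul_le_mul_of_nonneg_right hrk.le n.cast_nonneg
  have cobounded : Filter.IsCoboundedUnder (· ≥ ·) Filter.atTop
      fun n : ℕ => NAESat.satFraction n k ⌊r * n⌋₊ :=
    (Filter.isBoundedUnder_of ⟨1, fun n => NAESat.satFraction_le_one n k _⟩).isCoboundedUnder_ge
  exact (by norm_num : (0 : ℝ) < 1 / 8).trans_le (Filter.le_liminf_of_le cobounded bounded)
end
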